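/- Let n ≥ 1. Suppose f : ℝⁿ → ℂ is continuous and ℤⁿ-periodic, (g_m)_{m∈ℕ} is a sequence of continuous ℤⁿ-periodic functions on ℝⁿ that is uniformly bounded (there is M with |g_m(x)| ≤ M for all m and x) and converges pointwise to a function g : ℝⁿ → ℂ, and (ε_m)_{m∈ℕ} is a sequence of positive real numbers with ε_m → 0. Then lim_{m→∞} ε_m^{n/2} ∫_{ℝⁿ} e^{−π ε_m |x|²} f(x) g_m(x) dx = ∫_{[0,1]ⁿ} f(x) g(x) dx. -/

import Mathlib

/-!
Write `h m = f * g' m`, a uniformly bounded sequence of continuous periodic functions. Rescaling by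
`s = √(ε m)` turns the left-hand side into `∫ φ(u) h(s⁻¹ u) du`, where `φ` is the standard Gaussian
`exp (-π |u|²)`, of total mass one. Since `∫ h(a + y) dy` over the unit cube does not depend on `a`
(`setIntegral_cube_add`), Fubini and translation invariance give
`∫_{[0,1]ⁿ} h = ∫_{y ∈ [0,1]ⁿ} ∫_u φ(u - s y) h(s⁻¹ u) du dy`.
Hence the difference of the two integrals is at most `sup |h|` times the supremum over `y` in the
cube of the `L¹` distance between `φ` and its translate by `s y`
(`norm_gauss_integral_sub_cube_le`). This tends to zero with `s` by continuity of translation in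
`L¹` (`tendsto_integral_abs_gauss_sub`), uniformly in `m` because only a bound on `h` enters.
Finally `∫_{[0,1]ⁿ} h m → ∫_{[0,1]ⁿ} f g` by dominated convergence.
-/

open MeasureTheory Filter Real

/-- The standard Gaussian `exp (-π |x|²)` on `ℝⁿ`, with the Euclidean norm written out as a sum of
squares since `Fin n → ℝ` carries the sup norm. -/
noncomputable def gauss {n : ℕ} (x : Fin n → ℝ) : ℝ := Real.exp (-(π * ∑ i, x i ^ 2))

lemma gauss_nonneg {n : ℕ} (x : Fin n → ℝ) : 0 ≤ gauss x := (Real.exp_pos _).le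

lemma continuous_gauss {n : ℕ} : Continuous (gauss : (Fin n → ℝ) → ℝ) := by
  unfold gauss
  fun_prop

lemma integrable_exp_neg_mul_sum_sq {n : ℕ} {b : ℝ} (hb : 0 < b) :
    Integrable (fun x : Fin n → ℝ => Real.exp (-(b * ∑ i, x i ^ 2))) := by
  have h : Integrable (fun x : Fin n → ℝ => ∏ i, Real.exp (-b * x i ^ 2)) :=
    Integrable.fintype_prod (f := fun (_ : Fin n) (t : ℝ) => Real.exp (-b * t ^ 2))
      (fun _ => integrable_exp_neg_mul_sq hb)
  refine h.congr (ae_of_all _ fun x => ?_)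
  simp only [← Real.exp_sum, neg_mul, Finset.sum_neg_distrib, Finset.mul_sum]

lemma integrable_gauss {n : ℕ} : Integrable (gauss : (Fin n → ℝ) → ℝ) :=
  integrable_exp_neg_mul_sum_sq Real.pi_pos

lemma integral_gauss {n : ℕ} : ∫ x : Fin n → ℝ, gauss x = 1 := by
  have h : ∀ x : Fin n → ℝ, gauss x = ∏ i, Real.exp (-π * x i ^ 2) := fun x => by
    simp only [gauss, ← Real.exp_sum, neg_mul, Finset.sum_neg_distrib, Finset.mul_sum]
  simp_rw [h]
  rw [integral_fintype_prod_volume_eq_pow (fun t : ℝ => Real.exp (-π * t ^ 2)), integral_gaussian,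
    div_self Real.pi_ne_zero, Real.sqrt_one, one_pow]

/-- Continuity at zero of translation in `L¹`, for the Gaussian. -/
lemma tendsto_integral_abs_gauss_sub {n : ℕ} :
    Tendsto (fun z : Fin n → ℝ => ∫ u, |gauss u - gauss (u - z)|) (nhds 0) (nhds 0) := by
  have hz : ∫ u : Fin n → ℝ, |gauss u - gauss (u - 0)| = 0 := by simp
  rw [← hz]
  -- On the unit ball around `0`, `|u - z|² ≥ |u|² / 2 - |z|²` bounds every translate by a multiple
  -- of a wider Gaussian.
  refine tendsto_integral_filter_of_dominated_convergence
    (fun u => gauss u + Real.exp (π * n) * Real.exp (-((π / 2) * ∑ i, u i ^ 2))) ?_ ?_ ?_ ?_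
  · refine Eventually.of_forall fun z => Continuous.aestronglyMeasurable ?_
    exact (continuous_gauss.sub (continuous_gauss.comp (by fun_prop))).abs
  · filter_upwards [Metric.ball_mem_nhds (0 : Fin n → ℝ) one_pos] with z hz
    refine ae_of_all _ fun u => ?_
    have hzi : ∀ i, z i ^ 2 ≤ 1 := fun i => by
      have h1 : ‖z i‖ ≤ 1 := (norm_le_pi_norm z i).trans (mem_ball_zero_iff.1 hz).le
      rw [Real.norm_eq_abs] at h1
      exact (sq_le_one_iff_abs_le_one _).2 h1
    have hs : (∑ i, u i ^ 2) / 2 - n ≤ ∑ i, (u - z) i ^ 2 := by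
      have : ∑ i : Fin n, (u i ^ 2 / 2 - 1) ≤ ∑ i, (u - z) i ^ 2 :=
        Finset.sum_le_sum fun i _ => by
          rw [Pi.sub_apply]
          nlinarith [hzi i, sq_nonneg (u i - 2 * z i)]
      simpa [Finset.sum_sub_distrib, Finset.sum_div] using this
    have hb : gauss (u - z) ≤ Real.exp (π * n) * Real.exp (-((π / 2) * ∑ i, u i ^ 2)) := by
      rw [← Real.exp_add, gauss]
      refine Real.exp_le_exp.2 ?_
      nlinarith [mul_le_mul_of_nonneg_left hs Real.pi_pos.le]
    rw [Real.norm_eq_abs, abs_abs]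
    refine (abs_sub _ _).trans ?_
    rw [abs_of_nonneg (gauss_nonneg u), abs_of_nonneg (gauss_nonneg _)]
    gcongr
  · exact integrable_gauss.add ((integrable_exp_neg_mul_sum_sq (by positivity)).const_mul _)
  · refine ae_of_all _ fun u => Continuous.tendsto ?_ 0
    exact (continuous_const.sub (continuous_gauss.comp (by fun_prop))).abs

/-- A point of the lattice spanned by the standard basis has integer coordinates. -/
lemma exists_int_of_mem_span {n : ℕ} {v : Fin n → ℝ}
    (hv : v ∈ Submodule.span ℤ (Set.range (Pi.basisFun ℝ (Fin n)))) :
    ∃ j : Fin n → ℤ, v = fun i => (j i : ℝ) := by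
  choose j hj using ((Pi.basisFun ℝ (Fin n)).mem_span_iff_repr_mem ℤ v).1 hv
  exact ⟨j, funext fun i => by simpa using (hj i).symm⟩

/-- The integral of a periodic function over a translate of the unit cube is independent of the
translate, both being fundamental domains of `ℤⁿ`. -/
lemma setIntegral_cube_add {n : ℕ} {h : (Fin n → ℝ) → ℂ}
    (hper : ∀ (x : Fin n → ℝ) (j : Fin n → ℤ), h (x + fun i => (j i : ℝ)) = h x)
    (a : Fin n → ℝ) :
    ∫ y in Set.Icc (0 : Fin n → ℝ) 1, h (a + y) = ∫ y in Set.Icc (0 : Fin n → ℝ) 1, h y := by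
  set D := ZSpan.fundamentalDomain (Pi.basisFun ℝ (Fin n)) with hD
  have hae : D =ᵐ[volume] Set.Icc (0 : Fin n → ℝ) 1 := by
    rw [hD, ZSpan.fundamentalDomain_pi_basisFun]
    exact Measure.univ_pi_Ico_ae_eq_Icc
  rw [← setIntegral_congr_set hae, ← setIntegral_congr_set hae]
  have hfd := ZSpan.isAddFundamentalDomain' (Pi.basisFun ℝ (Fin n)) volume
  have hshift : ∀ (v : (Submodule.span ℤ (Set.range (Pi.basisFun ℝ (Fin n)))).toAddSubgroup) (x : Fin n → ℝ),
      h (v +ᵥ x) = h x := fun v x => by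
    obtain ⟨j, hj⟩ := exists_int_of_mem_span v.2
    rw [AddSubgroup.vadd_def, vadd_eq_add, hj, add_comm, hper]
  have hcount : Countable (Submodule.span ℤ (Set.range (Pi.basisFun ℝ (Fin n)))).toAddSubgroup :=
    inferInstanceAs (Countable (Submodule.span ℤ (Set.range (Pi.basisFun ℝ (Fin n)))))
  rw [← (hfd.vadd_of_comm a).setIntegral_eq hfd hshift]
  exact ((measurePreserving_add_left volume a).setIntegral_image_emb
    (measurableEmbedding_addLeft a) h D).symm

/-- A continuous periodic function is bounded by its maximum over the compact unit cube. -/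
lemma exists_norm_le_of_periodic {n : ℕ} {f : (Fin n → ℝ) → ℂ} (hf : Continuous f)
    (hper : ∀ (x : Fin n → ℝ) (j : Fin n → ℤ), f (x + fun i => (j i : ℝ)) = f x) :
    ∃ C, ∀ x, ‖f x‖ ≤ C := by
  obtain ⟨C, hC⟩ := (isCompact_Icc (a := (0 : Fin n → ℝ)) (b := 1)).exists_bound_of_continuousOn
    hf.continuousOn
  refine ⟨C, fun x => ?_⟩
  have hx : x = (fun i => Int.fract (x i)) + fun i => ((⌊x i⌋ : ℤ) : ℝ) :=
    funext fun i => (Int.fract_add_floor (x i)).symm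
  rw [hx, hper]
  exact hC _ ⟨fun i => Int.fract_nonneg _, fun i => (Int.fract_lt_one _).le⟩

/-- The Gaussian average of `h(s⁻¹ u)` differs from the mean of `h` over the unit cube by at most
`sup |h|` times the largest `L¹` distance from the Gaussian to its translates by `s y`. -/
lemma norm_gauss_integral_sub_cube_le {n : ℕ} {h : (Fin n → ℝ) → ℂ} (hcont : Continuous h)
    (hper : ∀ (x : Fin n → ℝ) (j : Fin n → ℤ), h (x + fun i => (j i : ℝ)) = h x)
    {C : ℝ} (hC : ∀ x, ‖h x‖ ≤ C) {s : ℝ} (hs : 0 < s) {δ : ℝ}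
    (hδ : ∀ y ∈ Set.Icc (0 : Fin n → ℝ) 1, ∫ u, |gauss u - gauss (u - s • y)| ≤ δ) :
    ‖(∫ u, (gauss u : ℂ) * h (s⁻¹ • u)) - ∫ y in Set.Icc (0 : Fin n → ℝ) 1, h y‖ ≤ C * δ := by
  have hvol : volume.real (Set.Icc (0 : Fin n → ℝ) 1) = 1 := by
    simp [measureReal_def, Real.volume_Icc_pi]
  have hC0 : 0 ≤ C := (norm_nonneg _).trans (hC 0)
  have hgi : Integrable (fun u : Fin n → ℝ => (gauss u : ℂ)) := integrable_gauss.ofReal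
  have hcs : Continuous (fun u : Fin n → ℝ => h (s⁻¹ • u)) := hcont.comp (by fun_prop)
  have hint : ∀ z : Fin n → ℝ,
      Integrable (fun u : Fin n → ℝ => (gauss (u - z) : ℂ) * h (s⁻¹ • u)) := fun z =>
    (hgi.comp_sub_right z).mul_bdd (c := C) hcs.aestronglyMeasurable (ae_of_all _ fun u => hC _)
  have hfub : Integrable
      (Function.uncurry fun u y : Fin n → ℝ => (gauss u : ℂ) * h (s⁻¹ • u + y))
      (volume.prod (volume.restrict (Set.Icc (0 : Fin n → ℝ) 1))) := by
    have h1 : Integrable (fun p : (Fin n → ℝ) × (Fin n → ℝ) => (gauss p.1 : ℂ) * 1)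
        (volume.prod (volume.restrict (Set.Icc (0 : Fin n → ℝ) 1))) :=
      hgi.mul_prod (g := fun _ => (1 : ℂ)) (integrableOn_const isCompact_Icc.measure_lt_top.ne)
    simp only [mul_one] at h1
    exact h1.mul_bdd (c := C)
      (hcont.comp (by fun_prop : Continuous fun p : (Fin n → ℝ) × (Fin n → ℝ) =>
        s⁻¹ • p.1 + p.2)).aestronglyMeasurable (ae_of_all _ fun p => hC _)
  have hJ : ∫ y in Set.Icc (0 : Fin n → ℝ) 1, h y =
      ∫ y in Set.Icc (0 : Fin n → ℝ) 1, ∫ u : Fin n → ℝ, (gauss u : ℂ) * h (s⁻¹ • u + y) := by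
    calc ∫ y in Set.Icc (0 : Fin n → ℝ) 1, h y
        = ∫ u : Fin n → ℝ, (gauss u : ℂ) * ∫ y in Set.Icc (0 : Fin n → ℝ) 1, h y := by
          rw [integral_mul_const, integral_complex_ofReal, integral_gauss]
          simp
      _ = ∫ u : Fin n → ℝ, ∫ y in Set.Icc (0 : Fin n → ℝ) 1,
            (gauss u : ℂ) * h (s⁻¹ • u + y) := by
          refine integral_congr_ae (ae_of_all _ fun u => ?_)
          simp only []
          rw [integral_const_mul, setIntegral_cube_add hper]
      _ = _ := integral_integral_swap hfub
  have hK : ∀ y : Fin n → ℝ, ∫ u : Fin n → ℝ, (gauss u : ℂ) * h (s⁻¹ • u + y) =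
      ∫ u, (gauss (u - s • y) : ℂ) * h (s⁻¹ • u) := fun y => by
    rw [← integral_sub_right_eq_self _ (s • y)]
    refine integral_congr_ae (ae_of_all _ fun u => ?_)
    simp only [smul_sub, inv_smul_smul₀ hs.ne', sub_add_cancel]
  have hI : ∫ u, (gauss u : ℂ) * h (s⁻¹ • u) =
      ∫ _y in Set.Icc (0 : Fin n → ℝ) 1, ∫ u, (gauss u : ℂ) * h (s⁻¹ • u) := by
    rw [setIntegral_const, hvol, one_smul]
  have hIi : Integrable (fun _ : Fin n → ℝ => ∫ u, (gauss u : ℂ) * h (s⁻¹ • u))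
      (volume.restrict (Set.Icc (0 : Fin n → ℝ) 1)) :=
    integrableOn_const isCompact_Icc.measure_lt_top.ne
  have hKi : Integrable (fun y : Fin n → ℝ => ∫ u, (gauss u : ℂ) * h (s⁻¹ • u + y))
      (volume.restrict (Set.Icc (0 : Fin n → ℝ) 1)) := hfub.integral_prod_right
  rw [hJ, hI, ← integral_sub hIi hKi]
  refine (norm_setIntegral_le_of_norm_le_const (C := C * δ) isCompact_Icc.measure_lt_top
    fun y hy => ?_).trans_eq (by rw [hvol, mul_one])
  have h0 : Integrable (fun u : Fin n → ℝ => (gauss u : ℂ) * h (s⁻¹ • u)) := by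
    simpa using hint 0
  have hd : Integrable (fun u : Fin n → ℝ => |gauss u - gauss (u - s • y)|) :=
    (integrable_gauss.sub (integrable_gauss.comp_sub_right (s • y))).abs
  rw [hK y, ← integral_sub h0 (hint _)]
  calc ‖∫ u, ((gauss u : ℂ) * h (s⁻¹ • u) - (gauss (u - s • y) : ℂ) * h (s⁻¹ • u))‖
      ≤ ∫ u, C * |gauss u - gauss (u - s • y)| := by
        refine norm_integral_le_of_norm_le (hd.const_mul C) (ae_of_all _ fun u => ?_)
        rw [← sub_mul, ← Complex.ofReal_sub, norm_mul, Complex.norm_real, Real.norm_eq_abs,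
          mul_comm]
        exact mul_le_mul_of_nonneg_right (hC _) (abs_nonneg _)
    _ ≤ C * δ := by
        rw [integral_const_mul]
        exact mul_le_mul_of_nonneg_left (hδ y hy) hC0

/-- The change of variables `u = √ε x`. -/
lemma gaussian_integral_rescale {n : ℕ} (h : (Fin n → ℝ) → ℂ) {ε : ℝ} (hε : 0 < ε) :
    ((ε ^ ((n : ℝ) / 2) : ℝ) : ℂ) *
        ∫ x : Fin n → ℝ, (Real.exp (-(π * ε * ∑ i, x i ^ 2)) : ℂ) * h x =
      ∫ u, (gauss u : ℂ) * h ((√ε)⁻¹ • u) := by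
  have hs : 0 < √ε := Real.sqrt_pos.2 hε
  have hpow : ε ^ ((n : ℝ) / 2) = √ε ^ n := by
    rw [Real.sqrt_eq_rpow, ← Real.rpow_natCast, ← Real.rpow_mul hε.le]
    congr 1
    ring
  have hsub := Measure.integral_comp_smul (volume : Measure (Fin n → ℝ))
    (fun u => (gauss u : ℂ) * h ((√ε)⁻¹ • u)) (√ε)
  have hL : ∀ x : Fin n → ℝ, (gauss (√ε • x) : ℂ) * h ((√ε)⁻¹ • √ε • x) =
      (Real.exp (-(π * ε * ∑ i, x i ^ 2)) : ℂ) * h x := fun x => by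
    rw [inv_smul_smul₀ hs.ne', gauss]
    simp only [Pi.smul_apply, smul_eq_mul, mul_pow, Real.sq_sqrt hε.le, ← Finset.mul_sum,
      ← mul_assoc]
  simp only [hL] at hsub
  have hpos : (0 : ℝ) < √ε ^ n := pow_pos hs n
  rw [hsub, hpow, Module.finrank_fin_fun, abs_of_pos (inv_pos.2 hpos), ← Complex.real_smul,
    smul_smul, mul_inv_cancel₀ hpos.ne', one_smul]

/-- Gaussian averaging lemma: if `f` is continuous and `ℤⁿ`-periodic, `(g_m)` is a uniformly
bounded sequence of continuous `ℤⁿ`-periodic functions converging pointwise to `g`, and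
`ε_m → 0` with `ε_m > 0`, then
`ε_m^{n/2} ∫_{ℝⁿ} e^{-π ε_m |x|²} f(x) g_m(x) dx → ∫_{[0,1]ⁿ} f(x) g(x) dx`. -/
theorem gaussian_average_tendsto (n : ℕ) (hn : 1 ≤ n)
    (f g : (Fin n → ℝ) → ℂ) (g' : ℕ → (Fin n → ℝ) → ℂ)
    (hf : Continuous f)
    (hfper : ∀ (x : Fin n → ℝ) (j : Fin n → ℤ), f (x + fun i => (j i : ℝ)) = f x)
    (hg'cont : ∀ m, Continuous (g' m))
    (hg'per : ∀ m (x : Fin n → ℝ) (j : Fin n → ℤ), g' m (x + fun i => (j i : ℝ)) = g' m x)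
    (M : ℝ) (hM : ∀ m x, ‖g' m x‖ ≤ M)
    (hlim : ∀ x, Tendsto (fun m => g' m x) atTop (nhds (g x)))
    (ε : ℕ → ℝ) (hε : ∀ m, 0 < ε m) (hε0 : Tendsto ε atTop (nhds 0)) :
    Tendsto
      (fun m => ((ε m ^ ((n : ℝ) / 2) : ℝ) : ℂ) *
        ∫ x : Fin n → ℝ, (Real.exp (-(π * ε m * ∑ i, x i ^ 2)) : ℂ) * (f x * g' m x))
      atTop
      (nhds (∫ x in Set.Icc (0 : Fin n → ℝ) 1, f x * g x)) := by
  obtain ⟨A, hA⟩ := exists_norm_le_of_periodic hf hfper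
  have hA0 : 0 ≤ A := (norm_nonneg _).trans (hA 0)
  have hbd : ∀ m x, ‖f x * g' m x‖ ≤ A * M := fun m x => by
    rw [norm_mul]
    exact mul_le_mul (hA x) (hM m x) (norm_nonneg _) hA0
  have hcube : Tendsto (fun m => ∫ x in Set.Icc (0 : Fin n → ℝ) 1, f x * g' m x) atTop
      (nhds (∫ x in Set.Icc (0 : Fin n → ℝ) 1, f x * g x)) :=
    tendsto_integral_of_dominated_convergence (fun _ => A * M)
      (fun m => (hf.mul (hg'cont m)).aestronglyMeasurable)
      (integrableOn_const isCompact_Icc.measure_lt_top.ne)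
      (fun m => ae_of_all _ (hbd m))
      (ae_of_all _ fun x => (hlim x).const_mul (f x))
  have hdiff : Tendsto (fun m => ((ε m ^ ((n : ℝ) / 2) : ℝ) : ℂ) *
      (∫ x : Fin n → ℝ, (Real.exp (-(π * ε m * ∑ i, x i ^ 2)) : ℂ) * (f x * g' m x)) -
      ∫ x in Set.Icc (0 : Fin n → ℝ) 1, f x * g' m x) atTop (nhds 0) := by
    rw [Metric.tendsto_nhds]
    intro η hη
    have hAM : 0 ≤ A * M := (norm_nonneg _).trans (hbd 0 0)
    have hδ : 0 < η / (A * M + 1) := by positivity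
    obtain ⟨r, hr, hball⟩ := Metric.eventually_nhds_iff.1
      ((tendsto_integral_abs_gauss_sub (n := n)).eventually (gt_mem_nhds hδ))
    have hsqrt : Tendsto (fun m => √(ε m)) atTop (nhds 0) := by
      simpa [Function.comp_def] using (Real.continuous_sqrt.tendsto 0).comp hε0
    filter_upwards [hsqrt.eventually (gt_mem_nhds hr)] with m hm
    rw [gaussian_integral_rescale (fun x => f x * g' m x) (hε m), dist_zero_right]
    have hs : 0 < √(ε m) := Real.sqrt_pos.2 (hε m)
    refine (norm_gauss_integral_sub_cube_le (h := fun x => f x * g' m x) (hf.mul (hg'cont m))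
      (fun x j => by simp only [hfper x j, hg'per m x j]) (hbd m) hs
      (δ := η / (A * M + 1)) fun y hy => (hball ?_).le).trans_lt ?_
    · have hy1 : ‖y‖ ≤ 1 := (pi_norm_le_iff_of_nonneg zero_le_one).2 fun i => by
        rw [Real.norm_eq_abs, abs_of_nonneg (hy.1 i)]
        exact hy.2 i
      rw [dist_zero_right, norm_smul, Real.norm_eq_abs, abs_of_pos hs]
      exact (mul_le_of_le_one_right hs.le hy1).trans_lt hm
    · rw [mul_div_assoc', div_lt_iff₀ (by positivity)]
      nlinarith
  simpa using hdiff.add hcube
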